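/- Let γ > 1 be a real number and let n be a positive integer with n + 1 > 2γ. Let N = {1,…,2n}, R = {1,…,n}, and for each r ∈ R let C_r = { {1}, {r+1}, {n+2}, {n+3}, …, {2n} } (a family of singletons). Fix f > 0 and let X̄ = { x ∈ [0,1]^{2n} : ∑_{j=1}^{2n} x_j ≤ 2 }. With 𝒜 = {⋃_{r∈R} S_r : S_r ∈ C_r}, v^agg(x) = sup{ f·y : y ∈ [0,1], ∑_{j∈S} x_j ≥ y for every S ∈ 𝒜 }, and v^disagg(x) = sup{ f·∑_{r∈R} z_r : z ∈ [0,1]^R, ∑_r z_r ≤ 1, ∑_{j∈S} x_j ≥ z_r for every r ∈ R, S ∈ C_r }, it holds that γ · sup_{x∈X̄} v^agg(x) ≤ sup_{x∈X̄} v^disagg(x). -/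

import Mathlib

/-- The aggregated family `𝒜 = {⋃_{r∈R} S_r : S_r ∈ C_r for each r ∈ R}`. -/
def aggFamily {N R : Type*} [DecidableEq N] [Fintype R]
    (C : R → Finset (Finset N)) : Set (Finset N) :=
  {A | ∃ g : R → Finset N, (∀ r, g r ∈ C r) ∧ A = Finset.univ.sup g}

/-- `v^disagg(x) = sup{ f·∑_r z_r : z ∈ [0,1]^R, ∑_r z_r ≤ 1,
`∑_{j∈S} x_j ≥ z_r` for every `r ∈ R` and `S ∈ C_r }`. -/
noncomputable def vdisagg {N R : Type*} [Fintype R]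
    (C : R → Finset (Finset N)) (f : ℝ) (x : N → ℝ) : ℝ :=
  sSup {t | ∃ z : R → ℝ,
    (∀ r, z r ∈ Set.Icc (0 : ℝ) 1) ∧ (∑ r, z r) ≤ 1 ∧
    (∀ r, ∀ S ∈ C r, z r ≤ ∑ j ∈ S, x j) ∧
    t = f * ∑ r, z r}

/-- `v^agg(x) = sup{ f·y : y ∈ [0,1], ∑_{j∈S} x_j ≥ y for every S ∈ 𝒜 }`. -/
noncomputable def vagg {N : Type*} (A : Set (Finset N)) (f : ℝ) (x : N → ℝ) : ℝ :=
  sSup {t | ∃ y : ℝ, y ∈ Set.Icc (0 : ℝ) 1 ∧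
    (∀ S ∈ A, y ≤ ∑ j ∈ S, x j) ∧ t = f * y}

/-- The instance of Proposition 4(i): nodes `N = {1,…,2n}` (labelled by naturals),
demands indexed by `r ∈ R = {1,…,n}` (modelled as `Fin n`, with `r ↦ r.val + 1`), and
`C_r = { {1}, {r+1}, {n+2}, {n+3}, …, {2n} }`, a family of singletons. -/
def C1 (n : ℕ) : Fin n → Finset (Finset ℕ) := fun r =>
  insert {1} (insert {(r : ℕ) + 2}
    ((Finset.Icc (n + 2) (2 * n)).image fun k => ({k} : Finset ℕ)))

/-!
The singletons of the `n` nodes `1, n + 2, …, 2n`, which serve every demand, and the set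
`{2, …, n + 1}` of the remaining nodes are `n + 1` disjoint members of the aggregated family. Each
must carry weight at least `y`, so a budget of `2` forces `y ≤ 2 / (n + 1)`. The disaggregated
formulation instead lets every demand claim a share `1 / n`, for which weight `1 / n` on each of
the `2n` nodes suffices, at total cost exactly `2`.
-/

section Aggregated

variable {N R : Type*} {f : ℝ} {x : N → ℝ} {T : Finset N}

theorem card_mul_le_sum_of_pairwise_disjoint {ι : Type*} [Fintype ι] {P : ι → Finset N} {y : ℝ}
    (hP : Pairwise (Function.onFun Disjoint P)) (hPT : ∀ i, P i ⊆ T) (hx : ∀ j ∈ T, 0 ≤ x j)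
    (hy : ∀ i, y ≤ ∑ j ∈ P i, x j) :
    (Fintype.card ι : ℝ) * y ≤ ∑ j ∈ T, x j := by
  classical
  calc (Fintype.card ι : ℝ) * y = ∑ _i : ι, y := by simp
    _ ≤ ∑ i, ∑ j ∈ P i, x j := Finset.sum_le_sum fun i _ => hy i
    _ = ∑ j ∈ Finset.univ.biUnion P, x j := (Finset.sum_biUnion (hP.set_pairwise _)).symm
    _ ≤ ∑ j ∈ T, x j := Finset.sum_le_sum_of_subset_of_nonneg
        (Finset.biUnion_subset.2 fun i _ => hPT i) fun j hj _ => hx j hj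

theorem card_mul_vagg_le_of_pairwise_disjoint {ι : Type*} [Fintype ι] {A : Set (Finset N)}
    {P : ι → Finset N} (hP : Pairwise (Function.onFun Disjoint P)) (hPA : ∀ i, P i ∈ A)
    (hPT : ∀ i, P i ⊆ T) (hx : ∀ j ∈ T, 0 ≤ x j) (hf : 0 ≤ f) :
    (Fintype.card ι : ℝ) * vagg A f x ≤ f * ∑ j ∈ T, x j := by
  rw [vagg, ← smul_eq_mul, ← Real.sSup_smul_of_nonneg (Nat.cast_nonneg _)]
  refine Real.sSup_le ?_ (mul_nonneg hf (Finset.sum_nonneg hx))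
  rintro _ ⟨_, ⟨y, -, hy, rfl⟩, rfl⟩
  calc (Fintype.card ι : ℝ) * (f * y) = f * (Fintype.card ι * y) := mul_left_comm _ _ _
    _ ≤ f * ∑ j ∈ T, x j := mul_le_mul_of_nonneg_left
        (card_mul_le_sum_of_pairwise_disjoint hP hPT hx fun i => hy _ (hPA i)) hf

variable [DecidableEq N] [Fintype R] {C : R → Finset (Finset N)}

theorem mem_aggFamily_of_forall_mem [Nonempty R] {S : Finset N} (hS : ∀ r, S ∈ C r) :
    S ∈ aggFamily C :=
  ⟨fun _ => S, hS, (Finset.sup_const Finset.univ_nonempty S).symm⟩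

theorem image_mem_aggFamily {s : R → N} (hs : ∀ r, {s r} ∈ C r) :
    Finset.univ.image s ∈ aggFamily C :=
  ⟨fun r => {s r}, hs, by rw [Finset.sup_singleton_apply]⟩

theorem card_add_one_mul_vagg_aggFamily_le [Nonempty R] {H : Finset N} {s : R → N}
    (hH : ∀ h ∈ H, ∀ r, {h} ∈ C r) (hs : ∀ r, {s r} ∈ C r) (hsH : ∀ r, s r ∉ H)
    (hHT : H ⊆ T) (hsT : ∀ r, s r ∈ T) (hx : ∀ j ∈ T, 0 ≤ x j) (hf : 0 ≤ f) :
    ((H.card : ℝ) + 1) * vagg (aggFamily C) f x ≤ f * ∑ j ∈ T, x j := by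
  let P : Option H → Finset N := fun i => i.elim (Finset.univ.image s) fun h => {h.1}
  have hdisj : Pairwise (Function.onFun Disjoint P) := by
    have hspokes (h : H) : Disjoint (Finset.univ.image s) {h.1} := by
      simp only [Finset.disjoint_singleton_right, Finset.mem_image, Finset.mem_univ, true_and]
      rintro ⟨r, hr⟩
      exact hsH r (hr ▸ h.2)
    rintro (_ | h) (_ | h') hne
    · exact absurd rfl hne
    · exact hspokes h'
    · exact (hspokes h).symm
    · exact Finset.disjoint_singleton.2 fun heq => hne (congrArg some (Subtype.ext heq))
  have hmem : ∀ i, P i ∈ aggFamily C := by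
    rintro (_ | h)
    · exact image_mem_aggFamily hs
    · exact mem_aggFamily_of_forall_mem (hH h h.2)
  have hsub : ∀ i, P i ⊆ T := by
    rintro (_ | h)
    · exact Finset.image_subset_iff.2 fun r _ => hsT r
    · exact Finset.singleton_subset_iff.2 (hHT h.2)
  simpa using card_mul_vagg_le_of_pairwise_disjoint hdisj hmem hsub hx hf

end Aggregated

section Disaggregated

variable {N R : Type*} [Fintype R] {C : R → Finset (Finset N)} {f : ℝ} {x : N → ℝ}

theorem vdisagg_le (C : R → Finset (Finset N)) (hf : 0 ≤ f) (x : N → ℝ) : vdisagg C f x ≤ f := by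
  refine Real.sSup_le ?_ hf
  rintro _ ⟨z, -, hz, -, rfl⟩
  exact mul_le_of_le_one_right hf hz

theorem mul_sum_le_vdisagg (hf : 0 ≤ f) {z : R → ℝ} (hz : ∀ r, z r ∈ Set.Icc (0 : ℝ) 1)
    (hsum : ∑ r, z r ≤ 1) (hcut : ∀ r, ∀ S ∈ C r, z r ≤ ∑ j ∈ S, x j) :
    f * ∑ r, z r ≤ vdisagg C f x := by
  refine le_csSup ⟨f, ?_⟩ ⟨z, hz, hsum, hcut, rfl⟩
  rintro _ ⟨w, -, hw, -, rfl⟩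
  exact mul_le_of_le_one_right hf hw

theorem vdisagg_eq_of_inv_card_le [Nonempty R] (hf : 0 ≤ f)
    (hx : ∀ r, ∀ S ∈ C r, (Fintype.card R : ℝ)⁻¹ ≤ ∑ j ∈ S, x j) : vdisagg C f x = f := by
  have hsum : ∑ _r : R, (Fintype.card R : ℝ)⁻¹ = 1 := by simp
  refine (vdisagg_le C hf x).antisymm ?_
  calc f = f * ∑ _r : R, (Fintype.card R : ℝ)⁻¹ := by rw [hsum, mul_one]
    _ ≤ vdisagg C f x := mul_sum_le_vdisagg hf
        (fun _ => ⟨by positivity, Nat.cast_inv_le_one _⟩) hsum.le hx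

theorem vdisagg_const_inv_card [Nonempty R] (hf : 0 ≤ f) (hC : ∀ r, ∀ S ∈ C r, S.Nonempty) :
    vdisagg C f (fun _ => (Fintype.card R : ℝ)⁻¹) = f := by
  refine vdisagg_eq_of_inv_card_le hf fun r S hS => ?_
  rw [Finset.sum_const, nsmul_eq_mul]
  exact le_mul_of_one_le_left (by positivity) (by exact_mod_cast (hC r S hS).card_pos)

end Disaggregated

section HubAndSpoke

/-- The nodes of the instance `C1 n` whose singletons belong to the family of every demand. The
remaining nodes `2, …, n + 1` are the spokes, one for each demand. -/
def hubs (n : ℕ) : Finset ℕ := insert 1 (Finset.Icc (n + 2) (2 * n))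

variable {n : ℕ} {f : ℝ}

theorem card_hubs (hn : 0 < n) : (hubs n).card = n := by
  rw [hubs, Finset.card_insert_of_notMem (by simp), Nat.card_Icc]
  omega

theorem hubs_subset_Icc (hn : 0 < n) : hubs n ⊆ Finset.Icc 1 (2 * n) := by
  intro j
  simp only [hubs, Finset.mem_insert, Finset.mem_Icc]
  omega

theorem spoke_notMem_hubs (r : Fin n) : (r : ℕ) + 2 ∉ hubs n := by
  simp only [hubs, Finset.mem_insert, Finset.mem_Icc]
  omega

theorem C1_apply (r : Fin n) :
    C1 n r = insert {(r : ℕ) + 2} ((hubs n).image fun h => ({h} : Finset ℕ)) := by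
  rw [C1, hubs, Finset.image_insert, Finset.insert_comm]

theorem nonempty_of_mem_C1 {r : Fin n} {S : Finset ℕ} (hS : S ∈ C1 n r) : S.Nonempty := by
  simp only [C1_apply, Finset.mem_insert, Finset.mem_image] at hS
  rcases hS with rfl | ⟨h, -, rfl⟩ <;> exact Finset.singleton_nonempty _

theorem succ_mul_vagg_C1_le (hn : 0 < n) (hf : 0 ≤ f) {x : ℕ → ℝ}
    (hx : ∀ j ∈ Finset.Icc 1 (2 * n), 0 ≤ x j) :
    ((n : ℝ) + 1) * vagg (aggFamily (C1 n)) f x ≤ f * ∑ j ∈ Finset.Icc 1 (2 * n), x j := by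
  have : Nonempty (Fin n) := ⟨⟨0, hn⟩⟩
  have hhub : ∀ h ∈ hubs n, ∀ r, {h} ∈ C1 n r := fun h hh r => by
    rw [C1_apply]
    exact Finset.mem_insert_of_mem (Finset.mem_image_of_mem _ hh)
  have hspoke (r : Fin n) : {(r : ℕ) + 2} ∈ C1 n r := by
    rw [C1_apply]
    exact Finset.mem_insert_self _ _
  have hspoke_mem (r : Fin n) : (r : ℕ) + 2 ∈ Finset.Icc 1 (2 * n) := by
    rw [Finset.mem_Icc]
    omega
  simpa only [card_hubs hn] using card_add_one_mul_vagg_aggFamily_le hhub hspoke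
    spoke_notMem_hubs (hubs_subset_Icc hn) hspoke_mem hx hf

theorem sSup_vagg_C1_le (hn : 0 < n) (hf : 0 ≤ f) :
    sSup {t | ∃ x : ℕ → ℝ,
        (∀ j ∈ Finset.Icc 1 (2 * n), x j ∈ Set.Icc (0 : ℝ) 1) ∧
        (∑ j ∈ Finset.Icc 1 (2 * n), x j) ≤ 2 ∧
        t = vagg (aggFamily (C1 n)) f x} ≤ f * 2 / ((n : ℝ) + 1) := by
  refine Real.sSup_le ?_ (by positivity)
  rintro _ ⟨x, hx, hbudget, rfl⟩
  rw [le_div_iff₀' (by positivity)]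
  exact (succ_mul_vagg_C1_le hn hf fun j hj => (hx j hj).1).trans
    (mul_le_mul_of_nonneg_left hbudget hf)

theorem sSup_vdisagg_C1 (hn : 0 < n) (hf : 0 ≤ f) :
    sSup {t | ∃ x : ℕ → ℝ,
        (∀ j ∈ Finset.Icc 1 (2 * n), x j ∈ Set.Icc (0 : ℝ) 1) ∧
        (∑ j ∈ Finset.Icc 1 (2 * n), x j) ≤ 2 ∧
        t = vdisagg (C1 n) f x} = f := by
  have : Nonempty (Fin n) := ⟨⟨0, hn⟩⟩
  have hvalue : vdisagg (C1 n) f (fun _ => (n : ℝ)⁻¹) = f := by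
    simpa only [Fintype.card_fin] using
      vdisagg_const_inv_card hf fun r S (hS : S ∈ C1 n r) => nonempty_of_mem_C1 hS
  have hcost : ∑ _j ∈ Finset.Icc 1 (2 * n), (n : ℝ)⁻¹ = 2 := by
    have hn' : (n : ℝ) ≠ 0 := by positivity
    simp [hn']
  refine IsGreatest.csSup_eq ⟨⟨fun _ => (n : ℝ)⁻¹, fun _ _ => ?_, hcost.le, hvalue.symm⟩, ?_⟩
  · exact ⟨by positivity, Nat.cast_inv_le_one n⟩
  · rintro _ ⟨x, -, -, rfl⟩
    exact vdisagg_le (C1 n) hf x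

end HubAndSpoke

/-- Proposition 4(i) of the paper.
For `γ > 1` and `n` with `n + 1 > 2γ`, on the explicit instance `C1 n` with budget set
`X̄ = {x ∈ [0,1]^{2n} : ∑_{j=1}^{2n} x_j ≤ 2}`, the LP bound from the aggregated
formulation times `γ` is still at most the LP bound from the disaggregated one. -/
theorem stmt_13 (γ : ℝ) (hγ : 1 < γ) (n : ℕ) (hn : 0 < n)
    (hnγ : 2 * γ < (n : ℝ) + 1) (f : ℝ) (hf : 0 < f) :
    γ * sSup {t | ∃ x : ℕ → ℝ,
        (∀ j ∈ Finset.Icc 1 (2 * n), x j ∈ Set.Icc (0 : ℝ) 1) ∧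
        (∑ j ∈ Finset.Icc 1 (2 * n), x j) ≤ 2 ∧
        t = vagg (aggFamily (C1 n)) f x}
      ≤ sSup {t | ∃ x : ℕ → ℝ,
        (∀ j ∈ Finset.Icc 1 (2 * n), x j ∈ Set.Icc (0 : ℝ) 1) ∧
        (∑ j ∈ Finset.Icc 1 (2 * n), x j) ≤ 2 ∧
        t = vdisagg (C1 n) f x} := by
  rw [sSup_vdisagg_C1 hn hf.le]
  calc _ ≤ γ * (f * 2 / ((n : ℝ) + 1)) :=
        mul_le_mul_of_nonneg_left (sSup_vagg_C1_le hn hf.le) (by linarith)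
    _ = f * (2 * γ / ((n : ℝ) + 1)) := by ring
    _ ≤ f := mul_le_of_le_one_right hf.le ((div_le_one (by positivity)).2 hnγ.le)
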